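/- For every prime p, the convolution identity Φ_p(1,0,0) * Φ_p(1,1,0) = Φ_p(2,1,0) + (p² + p + 1)·Φ_p(1,1,1) holds in the space of compactly supported K_p-biinvariant functions on GL_3(ℚ_p). -/

import Mathlib

open MeasureTheory

noncomputable section

variable (p : ℕ) [Fact p.Prime]

/-- The diagonal element `diag(p^a, p^b, p^c)` of `GL₃(ℚ_p)`. -/
def padicDiag (a b c : ℤ) : GL (Fin 3) ℚ_[p] := by
  have hp : (p : ℚ_[p]) ≠ 0 := by
    exact_mod_cast (Nat.cast_ne_zero (R := ℚ_[p])).mpr (Fact.out : p.Prime).ne_zero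
  refine ⟨Matrix.diagonal ![(p : ℚ_[p]) ^ a, (p : ℚ_[p]) ^ b, (p : ℚ_[p]) ^ c],
    Matrix.diagonal ![(p : ℚ_[p]) ^ (-a), (p : ℚ_[p]) ^ (-b), (p : ℚ_[p]) ^ (-c)], ?_, ?_⟩ <;>
  · rw [Matrix.diagonal_mul_diagonal]
    ext i j
    fin_cases i <;> fin_cases j <;>
      simp [zpow_neg, mul_inv_cancel₀ (zpow_ne_zero _ hp), inv_mul_cancel₀ (zpow_ne_zero _ hp)]

/-- `K_p = GL₃(ℤ_p)`, viewed as the image of `GL₃(ℤ_p)` inside `GL₃(ℚ_p)`. -/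
def padicK : Set (GL (Fin 3) ℚ_[p]) :=
  Set.range fun u : (Matrix (Fin 3) (Fin 3) ℤ_[p])ˣ =>
    Units.map (RingHom.toMonoidHom (RingHom.mapMatrix (PadicInt.Coe.ringHom (p := p)))) u

/-- The double coset `K_p · diag(p^a, p^b, p^c) · K_p`. -/
def padicDoubleCoset (a b c : ℤ) : Set (GL (Fin 3) ℚ_[p]) :=
  {x | ∃ k₁ ∈ padicK p, ∃ k₂ ∈ padicK p, x = k₁ * padicDiag p a b c * k₂}

/-- `Φ_p(a,b,c)`: the characteristic function of `K_p(a,b,c)`. -/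
def padicPhi (a b c : ℤ) : GL (Fin 3) ℚ_[p] → ℝ :=
  (padicDoubleCoset p a b c).indicator fun _ => (1 : ℝ)

instance : MeasurableSpace (GL (Fin 3) ℚ_[p]) := borel _

/-- Convolution of functions on `GL₃(ℚ_p)` with respect to a measure `μ`. -/
def padicConv (μ : Measure (GL (Fin 3) ℚ_[p])) (f h : GL (Fin 3) ℚ_[p] → ℝ) :
    GL (Fin 3) ℚ_[p] → ℝ :=
  fun x => ∫ y, f y * h (y⁻¹ * x) ∂μ

/-! ### Integral matrices -/

/-- The matrix has entries in `ℤ_p`. -/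
def IntM (M : Matrix (Fin 3) (Fin 3) ℚ_[p]) : Prop := ∀ i j, ‖M i j‖ ≤ 1

/-- The coercion of matrices. -/
abbrev cM (N : Matrix (Fin 3) (Fin 3) ℤ_[p]) : Matrix (Fin 3) (Fin 3) ℚ_[p] :=
  (PadicInt.Coe.ringHom (p := p)).mapMatrix N

@[simp]
lemma coe_rh (x : ℤ_[p]) : PadicInt.Coe.ringHom x = (x : ℚ_[p]) := rfl

lemma intM_cM (N : Matrix (Fin 3) (Fin 3) ℤ_[p]) : IntM p (cM p N) := by
  intro i j
  exact (N i j).2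

lemma IntM.exists_lift {M : Matrix (Fin 3) (Fin 3) ℚ_[p]} (h : IntM p M) :
    ∃ N : Matrix (Fin 3) (Fin 3) ℤ_[p], M = cM p N :=
  ⟨fun i j => ⟨M i j, h i j⟩, by ext i j; rfl⟩

lemma det_cM (N : Matrix (Fin 3) (Fin 3) ℤ_[p]) : (cM p N).det = ((N.det : ℤ_[p]) : ℚ_[p]) :=
  ((PadicInt.Coe.ringHom (p := p)).map_det N).symm

lemma IntM.mul {M N : Matrix (Fin 3) (Fin 3) ℚ_[p]} (hM : IntM p M) (hN : IntM p N) :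
    IntM p (M * N) := by
  obtain ⟨M, rfl⟩ := hM.exists_lift
  obtain ⟨N, rfl⟩ := hN.exists_lift
  rw [cM, cM, ← map_mul]
  exact intM_cM p _

/-- `K_p` as a subgroup. -/
def KS : Subgroup (GL (Fin 3) ℚ_[p]) :=
  (Units.map (RingHom.toMonoidHom (RingHom.mapMatrix (m := Fin 3)
    (PadicInt.Coe.ringHom (p := p))))).range

lemma padicK_eq : padicK p = (KS p : Set (GL (Fin 3) ℚ_[p])) := rfl

lemma mem_padicK_iff (y : GL (Fin 3) ℚ_[p]) : y ∈ padicK p ↔ y ∈ KS p := Iff.rfl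

lemma mem_KS_iff (y : GL (Fin 3) ℚ_[p]) : y ∈ KS p ↔ IntM p y.val ∧ ‖y.val.det‖ = 1 := by
  constructor
  · rintro ⟨u, rfl⟩
    refine ⟨intM_cM p u.val, ?_⟩
    change ‖(cM p u.val).det‖ = 1
    rw [det_cM]
    exact PadicInt.isUnit_iff.mp ((Matrix.isUnit_iff_isUnit_det _).mp u.isUnit)
  · rintro ⟨h1, h2⟩
    obtain ⟨N, hN⟩ := h1.exists_lift
    rw [hN, det_cM] at h2
    have hu : IsUnit N := (Matrix.isUnit_iff_isUnit_det _).mpr (PadicInt.isUnit_iff.mpr h2)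
    refine ⟨hu.unit, ?_⟩
    ext1
    exact hN.symm

lemma mem_DC (x : GL (Fin 3) ℚ_[p]) (a b c : ℤ) (L R : Matrix (Fin 3) (Fin 3) ℤ_[p])
    (hL : IsUnit L.det) (hR : IsUnit R.det)
    (h : x.val = cM p L * Matrix.diagonal ![(p : ℚ_[p]) ^ a, (p : ℚ_[p]) ^ b, (p : ℚ_[p]) ^ c]
      * cM p R) : x ∈ padicDoubleCoset p a b c := by
  have hL := (Matrix.isUnit_iff_isUnit_det _).mpr hL
  have hR := (Matrix.isUnit_iff_isUnit_det _).mpr hR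
  refine ⟨_, ⟨hL.unit, rfl⟩, _, ⟨hR.unit, rfl⟩, ?_⟩
  ext1
  exact h

lemma DC_mul_left {a b c : ℤ} {x k : GL (Fin 3) ℚ_[p]} (hk : k ∈ KS p)
    (hx : x ∈ padicDoubleCoset p a b c) : k * x ∈ padicDoubleCoset p a b c := by
  obtain ⟨k1, h1, k2, h2, rfl⟩ := hx
  exact ⟨k * k1, (KS p).mul_mem hk h1, k2, h2, by group⟩

lemma DC_mul_right {a b c : ℤ} {x k : GL (Fin 3) ℚ_[p]} (hk : k ∈ KS p)
    (hx : x ∈ padicDoubleCoset p a b c) : x * k ∈ padicDoubleCoset p a b c := by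
  obtain ⟨k1, h1, k2, h2, rfl⟩ := hx
  exact ⟨k1, h1, k2 * k, (KS p).mul_mem h2 hk, by group⟩

lemma pQ_ne : (p : ℚ_[p]) ≠ 0 := by
  exact_mod_cast (Nat.cast_ne_zero (R := ℚ_[p])).mpr (Fact.out : p.Prime).ne_zero

/-- Integral matrices of determinant of norm `1/p`. -/
def AA : Set (GL (Fin 3) ℚ_[p]) := {y | IntM p y.val ∧ ‖y.val.det‖ = (p : ℝ)⁻¹}

lemma AA_mul_left {x k : GL (Fin 3) ℚ_[p]} (hk : k ∈ KS p) (hx : x ∈ AA p) : k * x ∈ AA p := by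
  rw [mem_KS_iff] at hk
  refine ⟨hk.1.mul p hx.1, ?_⟩
  rw [Units.val_mul, Matrix.det_mul, norm_mul, hk.2, hx.2, one_mul]

lemma AA_mul_right {x k : GL (Fin 3) ℚ_[p]} (hk : k ∈ KS p) (hx : x ∈ AA p) : x * k ∈ AA p := by
  rw [mem_KS_iff] at hk
  refine ⟨hx.1.mul p hk.1, ?_⟩
  rw [Units.val_mul, Matrix.det_mul, norm_mul, hk.2, hx.2, mul_one]

/-- Transposition on `GL₃`. -/
def tr (y : GL (Fin 3) ℚ_[p]) : GL (Fin 3) ℚ_[p] :=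
  ⟨y.val.transpose, (y⁻¹).val.transpose, by rw [← Matrix.transpose_mul]; simp, by
    rw [← Matrix.transpose_mul]; simp⟩

lemma tr_mul (x y : GL (Fin 3) ℚ_[p]) : tr p (x * y) = tr p y * tr p x := by
  ext1
  exact Matrix.transpose_mul _ _

lemma tr_tr (x : GL (Fin 3) ℚ_[p]) : tr p (tr p x) = x := by
  ext1
  exact Matrix.transpose_transpose _

lemma tr_KS {x : GL (Fin 3) ℚ_[p]} (h : x ∈ KS p) : tr p x ∈ KS p := by
  rw [mem_KS_iff] at h ⊢
  refine ⟨fun i j => h.1 j i, ?_⟩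
  change ‖(x.val.transpose).det‖ = 1
  rw [Matrix.det_transpose, h.2]

lemma tr_AA {x : GL (Fin 3) ℚ_[p]} (h : x ∈ AA p) : tr p x ∈ AA p := by
  refine ⟨fun i j => h.1 j i, ?_⟩
  change ‖(x.val.transpose).det‖ = _
  rw [Matrix.det_transpose, h.2]

/-! ### Coset representatives -/

/-- The index set of the cosets. -/
abbrev Idx := (ZMod p × ZMod p) ⊕ (ZMod p ⊕ Unit)

/-- lift of a residue class -/
def li (a : ZMod p) : ℤ_[p] := (a.val : ℤ_[p])

lemma toZMod_li (a : ZMod p) : PadicInt.toZMod (li p a) = a := by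
  simp [li]

lemma li_zero : li p 0 = 0 := by simp [li]

/-- Representative matrices. -/
def MM : Idx p → Matrix (Fin 3) (Fin 3) ℚ_[p]
  | .inl (a, b) => !![(p : ℚ_[p]), -(li p a : ℚ_[p]), -(li p b : ℚ_[p]); 0, 1, 0; 0, 0, 1]
  | .inr (.inl a) => !![1, 0, 0; 0, (p : ℚ_[p]), -(li p a : ℚ_[p]); 0, 0, 1]
  | .inr (.inr _) => !![1, 0, 0; 0, 1, 0; 0, 0, (p : ℚ_[p])]

/-- Inverses of representative matrices. -/
def MI : Idx p → Matrix (Fin 3) (Fin 3) ℚ_[p]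
  | .inl (a, b) => !![(p : ℚ_[p])⁻¹, (li p a : ℚ_[p]) / p, (li p b : ℚ_[p]) / p; 0, 1, 0; 0, 0, 1]
  | .inr (.inl a) => !![1, 0, 0; 0, (p : ℚ_[p])⁻¹, (li p a : ℚ_[p]) / p; 0, 0, 1]
  | .inr (.inr _) => !![1, 0, 0; 0, 1, 0; 0, 0, (p : ℚ_[p])⁻¹]

lemma MM_mul_MI (r : Idx p) : MM p r * MI p r = 1 := by
  have hp := pQ_ne p
  rcases r with ⟨a, b⟩ | a | _ <;> ext i j <;> fin_cases i <;> fin_cases j <;>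
    simp [MM, MI, Matrix.mul_apply, Fin.sum_univ_three, hp] <;> field_simp <;> ring

/-- Representatives. -/
def MG (r : Idx p) : GL (Fin 3) ℚ_[p] :=
  ⟨MM p r, MI p r, MM_mul_MI p r, mul_eq_one_comm.mp (MM_mul_MI p r)⟩

lemma det_MM (r : Idx p) : (MM p r).det = p := by
  rcases r with ⟨a, b⟩ | a | _ <;> simp [MM, Matrix.det_fin_three]

lemma MG_mem_DC (r : Idx p) : MG p r ∈ padicDoubleCoset p 1 0 0 := by
  rcases r with ⟨a, b⟩ | a | _
  · refine mem_DC p _ 1 0 0 !![1, -li p a, -li p b; 0, 1, 0; 0, 0, 1] 1 ?_ ?_ ?_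
    · simp [Matrix.det_fin_three]
    · simp
    · ext i j; fin_cases i <;> fin_cases j <;>
        simp [MG, MM, Matrix.mul_apply, Fin.sum_univ_three]
  · refine mem_DC p _ 1 0 0 !![0, 1, 0; 1, 0, -li p a; 0, 0, 1] !![0, 1, 0; 1, 0, 0; 0, 0, 1]
      ?_ ?_ ?_
    · simp [Matrix.det_fin_three]
    · simp [Matrix.det_fin_three]
    · ext i j; fin_cases i <;> fin_cases j <;>
        simp [MG, MM, Matrix.mul_apply, Fin.sum_univ_three]
  · refine mem_DC p _ 1 0 0 !![0, 0, 1; 0, 1, 0; 1, 0, 0] !![0, 0, 1; 0, 1, 0; 1, 0, 0]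
      ?_ ?_ ?_
    · simp [Matrix.det_fin_three]
    · simp [Matrix.det_fin_three]
    · ext i j; fin_cases i <;> fin_cases j <;>
        simp [MG, MM, Matrix.mul_apply, Fin.sum_univ_three]

lemma norm_div_p_le {x : ℤ_[p]} (h : PadicInt.toZMod x = 0) :
    ‖(x : ℚ_[p]) / p‖ ≤ 1 := by
  have h1 : x ∈ RingHom.ker (PadicInt.toZMod : ℤ_[p] →+* ZMod p) := h
  rw [PadicInt.ker_toZMod, PadicInt.maximalIdeal_eq_span_p, Ideal.mem_span_singleton] at h1
  obtain ⟨y, rfl⟩ := h1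
  have hp := pQ_ne p
  have : (((p : ℤ_[p]) * y : ℤ_[p]) : ℚ_[p]) / p = y := by
    push_cast
    field_simp
  rw [this]
  exact y.2

lemma toZMod_eq_zero {x : ℤ_[p]} (h : ‖(x : ℚ_[p]) / p‖ ≤ 1) : PadicInt.toZMod x = 0 := by
  change x ∈ RingHom.ker (PadicInt.toZMod : ℤ_[p] →+* ZMod p)
  rw [PadicInt.ker_toZMod, PadicInt.maximalIdeal_eq_span_p, Ideal.mem_span_singleton]
  refine ⟨⟨(x : ℚ_[p]) / p, h⟩, ?_⟩
  have hp := pQ_ne p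
  apply Subtype.ext
  change (x : ℚ_[p]) = p * ((x : ℚ_[p]) / p)
  field_simp

lemma toZMod_eq_zero_of_norm {x : ℤ_[p]} (h : ‖x‖ < 1) : PadicInt.toZMod x = 0 := by
  change x ∈ RingHom.ker (PadicInt.toZMod : ℤ_[p] →+* ZMod p)
  rw [PadicInt.ker_toZMod, PadicInt.maximalIdeal_eq_span_p, Ideal.mem_span_singleton]
  exact (PadicInt.norm_lt_one_iff_dvd x).mp h

lemma isUnit_li {a : ZMod p} (ha : a ≠ 0) : IsUnit (li p a) := by
  by_contra h
  rw [PadicInt.not_isUnit_iff] at h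
  exact ha (by simpa [toZMod_li] using toZMod_eq_zero_of_norm p h)

lemma one_lt_p : (1 : ℝ) < p := by exact_mod_cast (Fact.out : p.Prime).one_lt

/-- Every element of `AA` lies in one of the cosets. -/
lemma exists_idx {y : GL (Fin 3) ℚ_[p]} (hy : y ∈ AA p) : ∃ r, (MG p r)⁻¹ * y ∈ KS p := by
  suffices h : ∃ r, IntM p (MI p r * y.val) by
    obtain ⟨r, hr⟩ := h
    refine ⟨r, (mem_KS_iff p _).mpr ⟨hr, ?_⟩⟩
    have h1 : (MG p r * ((MG p r)⁻¹ * y)).val.det = y.val.det := by rw [mul_inv_cancel_left]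
    rw [Units.val_mul, Matrix.det_mul] at h1
    have h2 := congrArg norm h1
    rw [norm_mul, hy.2, show (MG p r).val.det = p from det_MM p r, Padic.norm_p] at h2
    have h3 : (p : ℝ)⁻¹ ≠ 0 := inv_ne_zero (by have := one_lt_p p; positivity)
    exact mul_left_cancel₀ h3 (by rw [h2, mul_one])
  obtain ⟨N, hN⟩ := hy.1.exists_lift
  have hd := hy.2
  rw [hN, det_cM] at hd
  have hdet : (PadicInt.toZMod.mapMatrix N).det = 0 := by
    rw [← RingHom.map_det]
    apply toZMod_eq_zero_of_norm
    rw [← PadicInt.norm_def] at hd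
    rw [hd]
    exact inv_lt_one_of_one_lt₀ (one_lt_p p)
  obtain ⟨s, hs0, hs⟩ := Matrix.exists_vecMul_eq_zero_iff.mpr hdet
  have hs' : ∀ j, s 0 * PadicInt.toZMod (N 0 j) + s 1 * PadicInt.toZMod (N 1 j)
      + s 2 * PadicInt.toZMod (N 2 j) = 0 := by
    intro j
    have := congrFun hs j
    simpa [Matrix.vecMul, dotProduct, Fin.sum_univ_three] using this
  rw [hN]
  by_cases h0 : s 0 = 0
  · by_cases h1 : s 1 = 0
    · have h2 : s 2 ≠ 0 := by
        intro h2
        apply hs0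
        ext i
        fin_cases i <;> simp [h0, h1, h2]
      refine ⟨.inr (.inr ()), ?_⟩
      intro i j
      fin_cases i
      · simpa [MI, Matrix.mul_apply, Fin.sum_univ_three] using (N 0 j).2
      · simpa [MI, Matrix.mul_apply, Fin.sum_univ_three] using (N 1 j).2
      · have := norm_div_p_le p (x := N 2 j) (by simpa [h0, h1, h2] using hs' j)
        simpa [MI, Matrix.mul_apply, Fin.sum_univ_three, div_eq_inv_mul] using this
    · refine ⟨.inr (.inl (s 2 / s 1)), ?_⟩
      intro i j
      fin_cases i
      · simpa [MI, Matrix.mul_apply, Fin.sum_univ_three] using (N 0 j).2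
      · have := norm_div_p_le p (x := N 1 j + li p (s 2 / s 1) * N 2 j) (by
          have := hs' j
          simp only [map_add, map_mul, toZMod_li]
          rw [h0] at this
          field_simp
          linear_combination this)
        convert this using 2
        simp [MI, Matrix.mul_apply, Fin.sum_univ_three]
        ring
      · simpa [MI, Matrix.mul_apply, Fin.sum_univ_three] using (N 2 j).2
  · refine ⟨.inl (s 1 / s 0, s 2 / s 0), ?_⟩
    intro i j
    fin_cases i
    · have := norm_div_p_le p
        (x := N 0 j + li p (s 1 / s 0) * N 1 j + li p (s 2 / s 0) * N 2 j) (by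
          have := hs' j
          simp only [map_add, map_mul, toZMod_li]
          field_simp
          linear_combination this)
      convert this using 2
      simp [MI, Matrix.mul_apply, Fin.sum_univ_three]
      ring
    · simpa [MI, Matrix.mul_apply, Fin.sum_univ_three] using (N 1 j).2
    · simpa [MI, Matrix.mul_apply, Fin.sum_univ_three] using (N 2 j).2

lemma diag_mem_AA : padicDiag p 1 0 0 ∈ AA p := by
  refine ⟨?_, ?_⟩
  · intro i j
    change ‖Matrix.diagonal ![(p : ℚ_[p]) ^ (1 : ℤ), (p : ℚ_[p]) ^ (0 : ℤ), (p : ℚ_[p]) ^ (0 : ℤ)]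
      i j‖ ≤ 1
    have := inv_le_one_of_one_le₀ (one_lt_p p).le
    fin_cases i <;> fin_cases j <;> simp [this]
  · change ‖(Matrix.diagonal ![(p : ℚ_[p]) ^ (1 : ℤ), (p : ℚ_[p]) ^ (0 : ℤ),
      (p : ℚ_[p]) ^ (0 : ℤ)]).det‖ = _
    simp [Matrix.det_diagonal, Fin.prod_univ_three]

lemma DC_eq_AA : padicDoubleCoset p 1 0 0 = AA p := by
  ext y
  constructor
  · rintro ⟨k1, h1, k2, h2, rfl⟩
    exact AA_mul_right p h2 (AA_mul_left p h1 (diag_mem_AA p))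
  · intro hy
    obtain ⟨r, hr⟩ := exists_idx p hy
    have := DC_mul_right p hr (MG_mem_DC p r)
    rwa [mul_inv_cancel_left] at this

/-- The cosets are distinct. -/
lemma idx_inj {r s : Idx p} (h : (MG p r)⁻¹ * MG p s ∈ KS p) : r = s := by
  have key : ∀ r s, (MG p r)⁻¹ * MG p s ∈ KS p → IntM p (MI p r * MM p s) :=
    fun r s h => ((mem_KS_iff p _).mp h).1
  have h1 := key r s h
  have h2 := key s r (by
    have := (KS p).inv_mem h
    rwa [mul_inv_rev, inv_inv] at this)
  have hp1 : ¬ ((p : ℝ) ≤ 1) := not_le.mpr (one_lt_p p)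
  have hc : ∀ a b : ZMod p, ‖-((li p b : ℚ_[p]) / p) + (li p a : ℚ_[p]) / p‖ ≤ 1 → a = b := by
    intro a b hab
    have := toZMod_eq_zero p (x := li p a - li p b) (by
      push_cast
      convert hab using 2
      ring)
    rw [map_sub, toZMod_li, toZMod_li] at this
    exact sub_eq_zero.mp this
  have hc : ∀ a b : ZMod p, ‖-((p : ℚ_[p])⁻¹ * (li p b : ℚ_[p])) + (li p a : ℚ_[p]) / p‖ ≤ 1 →
      a = b := by
    intro a b hab
    refine hc a b ?_
    convert hab using 3
    ring
  rcases r with ⟨a, b⟩ | a | _ <;> rcases s with ⟨c, d⟩ | c | _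
  · have e1 := h1 0 1
    have e2 := h1 0 2
    simp [MI, MM, Matrix.mul_apply, Fin.sum_univ_three] at e1 e2
    rw [hc _ _ e1, hc _ _ e2]
  · have e1 := h1 0 0
    simp [MI, MM, Matrix.mul_apply, Fin.sum_univ_three, hp1] at e1
  · have e1 := h1 0 0
    simp [MI, MM, Matrix.mul_apply, Fin.sum_univ_three, hp1] at e1
  · have e1 := h2 0 0
    simp [MI, MM, Matrix.mul_apply, Fin.sum_univ_three, hp1] at e1
  · have e1 := h1 1 2
    simp [MI, MM, Matrix.mul_apply, Fin.sum_univ_three] at e1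
    rw [hc _ _ e1]
  · have e1 := h1 1 1
    simp [MI, MM, Matrix.mul_apply, Fin.sum_univ_three, hp1] at e1
  · have e1 := h2 0 0
    simp [MI, MM, Matrix.mul_apply, Fin.sum_univ_three, hp1] at e1
  · have e1 := h2 1 1
    simp [MI, MM, Matrix.mul_apply, Fin.sum_univ_three, hp1] at e1
  · rfl

/-! ### The main dichotomy -/

lemma isUnit_li_inv {a : ZMod p} (ha : a ≠ 0) :
    ∃ u : ℤ_[p], li p a * u = 1 ∧ (li p a : ℚ_[p]) * (u : ℚ_[p]) = 1 := by
  obtain ⟨u, hu⟩ := (isUnit_li p ha).exists_right_inv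
  exact ⟨u, hu, by exact_mod_cast congrArg (fun t : ℤ_[p] => (t : ℚ_[p])) hu⟩

lemma norm_cancel {a : ZMod p} (ha : a ≠ 0) {t s : ℚ_[p]} (hs : ‖s‖ ≤ 1)
    (h : ‖(li p a : ℚ_[p]) * t + s‖ ≤ 1) : ‖t‖ ≤ 1 := by
  have h1 : ‖(li p a : ℚ_[p])‖ = 1 := PadicInt.isUnit_iff.mp (isUnit_li p ha)
  have h2 : ‖((li p a : ℚ_[p]) * t + s) - s‖ ≤ 1 := by
    rw [sub_eq_add_neg]
    refine (Padic.nonarchimedean _ _).trans ?_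
    rw [norm_neg]
    exact max_le h hs
  rw [add_sub_cancel_right, norm_mul, h1, one_mul] at h2
  exact h2

lemma inv_diag_val : ((padicDiag p 1 0 0)⁻¹).val =
    Matrix.diagonal ![(p : ℚ_[p])⁻¹, 1, 1] := by
  change Matrix.diagonal ![(p : ℚ_[p]) ^ (-1 : ℤ), (p : ℚ_[p]) ^ (-0 : ℤ), (p : ℚ_[p]) ^ (-0 : ℤ)] = _
  simp

lemma diag_val (a b c : ℤ) : (padicDiag p a b c).val =
    Matrix.diagonal ![(p : ℚ_[p]) ^ a, (p : ℚ_[p]) ^ b, (p : ℚ_[p]) ^ c] := rfl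

lemma inv_tr_val (r : Idx p) : ((tr p (MG p r))⁻¹).val = (MI p r).transpose := rfl

lemma tr_val (r : Idx p) : (tr p (MG p r)).val = (MM p r).transpose := rfl

lemma dichotomy_int (r : Idx p) (h : padicDiag p 1 0 0 * (tr p (MG p r))⁻¹ ∉ KS p)
    (y : GL (Fin 3) ℚ_[p]) (hy : IntM p y.val)
    (hy2 : IntM p (tr p (MG p r) * ((padicDiag p 1 0 0)⁻¹ * y)).val) :
    IntM p ((padicDiag p 1 0 0)⁻¹ * y).val := by
  have hp := pQ_ne p
  have hy1 : ∀ j, ‖y.val 1 j‖ ≤ 1 := fun j => hy 1 j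
  have hy3 : ∀ j, ‖y.val 2 j‖ ≤ 1 := fun j => hy 2 j
  rw [Units.val_mul, inv_diag_val]
  rw [Units.val_mul, Units.val_mul, inv_diag_val, tr_val] at hy2
  suffices hh : ∀ j, ‖(p : ℚ_[p])⁻¹ * y.val 0 j‖ ≤ 1 by
    intro i j
    fin_cases i
    · simpa [Matrix.diagonal_mul] using hh j
    · simpa [Matrix.diagonal_mul] using hy1 j
    · simpa [Matrix.diagonal_mul] using hy3 j
  intro j
  rcases r with ⟨a, b⟩ | a | _
  · by_cases ha : a = 0
    · by_cases hb : b = 0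
      · exfalso
        apply h
        convert (KS p).one_mem
        ext i j
        rw [Units.val_mul, inv_tr_val, diag_val, ha, hb]
        fin_cases i <;> fin_cases j <;>
          simp [MI, Matrix.diagonal_mul, li_zero, hp]
      · refine norm_cancel p hb (s := - y.val 2 j) (by rw [norm_neg]; exact hy3 j) ?_
        have := hy2 2 j
        simp [MM, Matrix.mul_apply, Matrix.diagonal_apply, Fin.sum_univ_three] at this
        rw [← norm_neg]
        convert this using 2
        · rfl
        · ring
    · refine norm_cancel p ha (s := - y.val 1 j) (by rw [norm_neg]; exact hy1 j) ?_
      have := hy2 1 j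
      simp [MM, Matrix.mul_apply, Matrix.diagonal_apply, Fin.sum_univ_three] at this
      rw [← norm_neg]
      convert this using 2
      · rfl
      · ring
  · have := hy2 0 j
    simpa [MM, Matrix.mul_apply, Matrix.diagonal_apply, Fin.sum_univ_three] using this
  · have := hy2 0 j
    simpa [MM, Matrix.mul_apply, Matrix.diagonal_apply, Fin.sum_univ_three] using this

lemma dichotomy_DC (r : Idx p) (h : padicDiag p 1 0 0 * (tr p (MG p r))⁻¹ ∉ KS p) :
    padicDiag p 1 1 1 * (padicDiag p 1 0 0 * (tr p (MG p r))⁻¹) ∈ padicDoubleCoset p 2 1 0 := by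
  have hp := pQ_ne p
  rcases r with ⟨a, b⟩ | a | _
  · by_cases ha : a = 0
    · by_cases hb : b = 0
      · exfalso
        apply h
        convert (KS p).one_mem
        ext i j
        rw [Units.val_mul, inv_tr_val, diag_val, ha, hb]
        fin_cases i <;> fin_cases j <;>
          simp [MI, Matrix.diagonal_mul, li_zero, hp]
      · obtain ⟨u, hu, hu'⟩ := isUnit_li_inv p hb
        refine mem_DC p _ 2 1 0 !![1, 0, (p : ℤ_[p]); 0, 1, li p a; 0, 0, li p b]
          !![0, 0, -u; 0, 1, -(li p a * u); 1, 0, p * u] ?_ ?_ ?_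
        · simpa [Matrix.det_fin_three] using isUnit_li p hb
        · simpa [Matrix.det_fin_three] using IsUnit.of_mul_eq_one_right _ hu
        · ext i j
          rw [Units.val_mul, Units.val_mul, inv_tr_val, diag_val, diag_val]
          fin_cases i <;> fin_cases j <;>
            simp [MI, Matrix.mul_apply, Matrix.diagonal_apply, Fin.sum_univ_three] <;>
            field_simp <;> first | exact hu'.symm | ring
    · obtain ⟨u, hu, hu'⟩ := isUnit_li_inv p ha
      refine mem_DC p _ 2 1 0 !![1, 0, (p : ℤ_[p]); 0, 0, li p a; 0, 1, li p b]
          !![0, -u, 0; 0, -(li p b * u), 1; 1, p * u, 0] ?_ ?_ ?_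
      · simpa [Matrix.det_fin_three] using isUnit_li p ha
      · simpa [Matrix.det_fin_three] using IsUnit.of_mul_eq_one_right _ hu
      · ext i j
        rw [Units.val_mul, Units.val_mul, inv_tr_val, diag_val, diag_val]
        fin_cases i <;> fin_cases j <;>
          simp [MI, Matrix.mul_apply, Matrix.diagonal_apply, Fin.sum_univ_three] <;>
          field_simp <;> first | exact hu'.symm | ring
  · refine mem_DC p _ 2 1 0 !![1, 0, 0; 0, 0, 1; 0, 1, li p a]
          !![1, 0, 0; 0, 0, 1; 0, 1, 0] ?_ ?_ ?_
    · simp [Matrix.det_fin_three]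
    · simp [Matrix.det_fin_three]
    · ext i j
      rw [Units.val_mul, Units.val_mul, inv_tr_val, diag_val, diag_val]
      fin_cases i <;> fin_cases j <;>
        simp [MI, Matrix.mul_apply, Matrix.diagonal_apply, Fin.sum_univ_three] <;>
        field_simp
  · refine mem_DC p _ 2 1 0 1 1 (by simp) (by simp) ?_
    ext i j
    rw [Units.val_mul, Units.val_mul, inv_tr_val, diag_val, diag_val]
    fin_cases i <;> fin_cases j <;>
      simp [MI, Matrix.mul_apply, Matrix.diagonal_apply, Fin.sum_univ_three] <;>
      field_simp

lemma pi_comm (x : GL (Fin 3) ℚ_[p]) : padicDiag p 1 1 1 * x = x * padicDiag p 1 1 1 := by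
  ext i j
  rw [Units.val_mul, Units.val_mul, diag_val, Matrix.diagonal_mul, Matrix.mul_diagonal]
  fin_cases i <;> fin_cases j <;> simp [mul_comm]

lemma main_key {g y₁ : GL (Fin 3) ℚ_[p]} (h1 : y₁ ∈ AA p) (h2 : g⁻¹ * y₁ ∈ AA p)
    (hg : g ∉ KS p) : padicDiag p 1 1 1 * g ∈ padicDoubleCoset p 2 1 0 ∧
      ∀ y ∈ AA p, g⁻¹ * y ∈ AA p → y₁⁻¹ * y ∈ KS p := by
  rw [← DC_eq_AA] at h1
  obtain ⟨k1, hk1, k2, hk2, rfl⟩ := h1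
  replace hk1 : k1 ∈ KS p := hk1
  replace hk2 : k2 ∈ KS p := hk2
  have hz := AA_mul_right p ((KS p).inv_mem hk2) h2
  obtain ⟨r, hk⟩ := exists_idx p (tr_AA p hz)
  obtain ⟨k, hk3⟩ : ∃ k, k = (MG p r)⁻¹ *
      tr p (g⁻¹ * (k1 * padicDiag p 1 0 0 * k2) * k2⁻¹) := ⟨_, rfl⟩
  rw [← hk3] at hk
  have e1 : g⁻¹ * (k1 * padicDiag p 1 0 0 * k2) * k2⁻¹ = tr p k * tr p (MG p r) := by
    rw [← tr_mul, hk3, mul_inv_cancel_left, tr_tr]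
  have e2 : g⁻¹ * k1 * padicDiag p 1 0 0 = tr p k * tr p (MG p r) := by
    rw [← e1]
    group
  have hk4 := tr_KS p hk
  generalize tr p k = k' at *
  have e3 : g = k1 * (padicDiag p 1 0 0 * (tr p (MG p r))⁻¹) * k'⁻¹ := by
    have : g = k1 * padicDiag p 1 0 0 * (g⁻¹ * k1 * padicDiag p 1 0 0)⁻¹ := by group
    rw [e2] at this
    rw [this]
    group
  have hnot : padicDiag p 1 0 0 * (tr p (MG p r))⁻¹ ∉ KS p := by
    intro hin
    apply hg
    rw [e3]
    exact (KS p).mul_mem ((KS p).mul_mem hk1 hin) ((KS p).inv_mem hk4)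
  constructor
  · have := DC_mul_right p ((KS p).inv_mem hk4) (DC_mul_left p hk1 (dichotomy_DC p r hnot))
    rw [e3]
    convert this using 1
    rw [← mul_assoc, ← mul_assoc, pi_comm p k1]
    group
  · intro y hy hgy
    have hy' : k1⁻¹ * y ∈ AA p := AA_mul_left p ((KS p).inv_mem hk1) hy
    have h3 : tr p (MG p r) * ((padicDiag p 1 0 0)⁻¹ * (k1⁻¹ * y)) ∈ AA p := by
      have := AA_mul_left p ((KS p).inv_mem hk4) hgy
      convert this using 1
      rw [e3]
      group
    have h4 := dichotomy_int p r hnot _ hy'.1 h3.1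
    have h5 : (padicDiag p 1 0 0)⁻¹ * (k1⁻¹ * y) ∈ KS p := by
      rw [mem_KS_iff]
      refine ⟨h4, ?_⟩
      rw [Units.val_mul, Matrix.det_mul, norm_mul, hy'.2, inv_diag_val]
      have := one_lt_p p
      simp [Matrix.det_diagonal, Fin.prod_univ_three]
    have := (KS p).mul_mem ((KS p).inv_mem hk2) h5
    convert this using 1
    group

lemma mem_DC110 (z : GL (Fin 3) ℚ_[p]) :
    z ∈ padicDoubleCoset p 1 1 0 ↔ padicDiag p 1 1 1 * z⁻¹ ∈ AA p := by
  have hp := pQ_ne p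
  rw [← DC_eq_AA]
  constructor
  · rintro ⟨k1, h1, k2, h2, rfl⟩
    have : padicDiag p 1 1 1 * (padicDiag p 1 1 0)⁻¹ ∈ padicDoubleCoset p 1 0 0 := by
      refine mem_DC p _ 1 0 0 !![0, 0, 1; 0, 1, 0; 1, 0, 0] !![0, 0, 1; 0, 1, 0; 1, 0, 0] ?_ ?_ ?_
      · simp [Matrix.det_fin_three]
      · simp [Matrix.det_fin_three]
      · ext i j
        change (Matrix.diagonal ![(p : ℚ_[p]) ^ (1 : ℤ), (p : ℚ_[p]) ^ (1 : ℤ),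
          (p : ℚ_[p]) ^ (1 : ℤ)] * Matrix.diagonal ![(p : ℚ_[p]) ^ (-1 : ℤ),
          (p : ℚ_[p]) ^ (-1 : ℤ), (p : ℚ_[p]) ^ (-0 : ℤ)]) i j = _
        fin_cases i <;> fin_cases j <;>
          simp [Matrix.mul_apply, Matrix.diagonal_apply, Fin.sum_univ_three, hp]
    have := DC_mul_right p ((KS p).inv_mem h1) (DC_mul_left p ((KS p).inv_mem h2) this)
    convert this using 1
    rw [← mul_assoc k2⁻¹, ← pi_comm]
    group
  · rintro ⟨k1, h1, k2, h2, h⟩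
    have : padicDiag p 1 1 1 * (padicDiag p 1 0 0)⁻¹ ∈ padicDoubleCoset p 1 1 0 := by
      refine mem_DC p _ 1 1 0 !![0, 0, 1; 0, 1, 0; 1, 0, 0] !![0, 0, 1; 0, 1, 0; 1, 0, 0] ?_ ?_ ?_
      · simp [Matrix.det_fin_three]
      · simp [Matrix.det_fin_three]
      · ext i j
        rw [Units.val_mul, inv_diag_val, diag_val]
        fin_cases i <;> fin_cases j <;>
          simp [Matrix.mul_apply, Matrix.diagonal_apply, Fin.sum_univ_three, hp]
    have := DC_mul_right p ((KS p).inv_mem h1) (DC_mul_left p ((KS p).inv_mem h2) this)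
    convert this using 1
    have e : z = (padicDiag p 1 1 1 * z⁻¹)⁻¹ * padicDiag p 1 1 1 := by group
    rw [e, h, ← pi_comm, ← mul_assoc k2⁻¹, ← pi_comm]
    group

lemma mem_DC111 (x : GL (Fin 3) ℚ_[p]) :
    x ∈ padicDoubleCoset p 1 1 1 ↔ (padicDiag p 1 1 1)⁻¹ * x ∈ KS p := by
  constructor
  · rintro ⟨k1, h1, k2, h2, rfl⟩
    rw [← pi_comm, mul_assoc, inv_mul_cancel_left]
    exact (KS p).mul_mem h1 h2
  · intro h
    exact ⟨1, (KS p).one_mem, _, h, by group⟩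

lemma of_DC210 {x : GL (Fin 3) ℚ_[p]} (hx : x ∈ padicDoubleCoset p 2 1 0) :
    (padicDiag p 1 1 1)⁻¹ * x ∉ KS p ∧
      ∃ y ∈ AA p, ((padicDiag p 1 1 1)⁻¹ * x)⁻¹ * y ∈ AA p := by
  have hp := pQ_ne p
  obtain ⟨k1, h1, k2, h2, rfl⟩ := hx
  have hc : (padicDiag p 1 1 1)⁻¹ * (k1 * padicDiag p 2 1 0 * k2) =
      k1 * ((padicDiag p 1 1 1)⁻¹ * padicDiag p 2 1 0) * k2 := by
    rw [← mul_left_cancel_iff (a := padicDiag p 1 1 1), mul_inv_cancel_left, ← mul_assoc,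
      ← mul_assoc, pi_comm]
    group
  rw [hc]
  constructor
  · intro h
    have h3 := (KS p).mul_mem (((KS p).mul_mem ((KS p).inv_mem h1) h)) ((KS p).inv_mem h2)
    have h4 : k1⁻¹ * (k1 * ((padicDiag p 1 1 1)⁻¹ * padicDiag p 2 1 0) * k2) * k2⁻¹ =
      (padicDiag p 1 1 1)⁻¹ * padicDiag p 2 1 0 := by group
    rw [h4, mem_KS_iff] at h3
    have h5 := h3.1 2 2
    change ‖(Matrix.diagonal ![(p : ℚ_[p]) ^ (-1 : ℤ), (p : ℚ_[p]) ^ (-1 : ℤ),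
          (p : ℚ_[p]) ^ (-1 : ℤ)] * Matrix.diagonal ![(p : ℚ_[p]) ^ (2 : ℤ),
          (p : ℚ_[p]) ^ (1 : ℤ), (p : ℚ_[p]) ^ (0 : ℤ)]) 2 2‖ ≤ 1 at h5
    simp at h5
    have := (Fact.out : p.Prime).one_lt
    omega
  · refine ⟨k1 * padicDiag p 1 0 0, AA_mul_left p h1 (diag_mem_AA p), ?_⟩
    have e : (k1 * ((padicDiag p 1 1 1)⁻¹ * padicDiag p 2 1 0) * k2)⁻¹ *
      (k1 * padicDiag p 1 0 0) = k2⁻¹ * MG p (.inr (.inr ())) := by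
      have : padicDiag p 1 1 1 * padicDiag p 1 0 0 =
          padicDiag p 2 1 0 * MG p (.inr (.inr ())) := by
        ext i j
        rw [Units.val_mul, Units.val_mul, diag_val, diag_val, diag_val]
        fin_cases i <;> fin_cases j <;>
          simp [MG, MM, Matrix.mul_apply, Matrix.diagonal_apply]
        ring
      rw [eq_comm, ← inv_mul_eq_iff_eq_mul.mpr this]
      group
    rw [e]
    refine AA_mul_left p ((KS p).inv_mem h2) ?_
    rw [← DC_eq_AA]
    exact MG_mem_DC p _

/-! ### Measures -/

instance : BorelSpace (GL (Fin 3) ℚ_[p]) := ⟨rfl⟩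

lemma isClosed_K : IsClosed (padicK p) := by
  have : padicK p = (⋂ i : Fin 3, ⋂ j : Fin 3, {y : GL (Fin 3) ℚ_[p] | ‖y.val i j‖ ≤ 1}) ∩
      {y | ‖y.val.det‖ = 1} := by
    ext y
    rw [mem_padicK_iff, mem_KS_iff]
    simp [IntM]
  rw [this]
  refine IsClosed.inter (isClosed_iInter fun i => isClosed_iInter fun j => ?_) ?_
  · exact isClosed_le ((Units.continuous_val.matrix_elem i j).norm) continuous_const
  · exact isClosed_eq (Units.continuous_val.matrix_det.norm) continuous_const

/-- left coset -/
def cos (y : GL (Fin 3) ℚ_[p]) : Set (GL (Fin 3) ℚ_[p]) := (fun z => y⁻¹ * z) ⁻¹' padicK p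

lemma meas_cos (y : GL (Fin 3) ℚ_[p]) : MeasurableSet (cos p y) :=
  ((isClosed_K p).preimage (continuous_const_mul _)).measurableSet

lemma measure_cos (μ : Measure (GL (Fin 3) ℚ_[p])) [μ.IsHaarMeasure]
    (hμ : μ (padicK p) = 1) (y : GL (Fin 3) ℚ_[p]) : μ (cos p y) = 1 := by
  rw [cos, measure_preimage_mul, hμ]

lemma AA_eq : AA p = ⋃ r, cos p (MG p r) := by
  ext y
  rw [Set.mem_iUnion]
  constructor
  · exact fun h => exists_idx p h
  · rintro ⟨r, hr⟩
    have := AA_mul_right p hr (x := MG p r) (by rw [← DC_eq_AA]; exact MG_mem_DC p r)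
    rwa [mul_inv_cancel_left] at this

lemma meas_AA : MeasurableSet (AA p) := by
  rw [AA_eq]
  exact MeasurableSet.iUnion fun r => meas_cos p _

lemma measure_AA (μ : Measure (GL (Fin 3) ℚ_[p])) [μ.IsHaarMeasure]
    (hμ : μ (padicK p) = 1) : μ (AA p) = ((p ^ 2 + p + 1 : ℕ) : ENNReal) := by
  rw [AA_eq, measure_iUnion _ (fun r => meas_cos p _)]
  · simp only [measure_cos p μ hμ]
    rw [tsum_fintype]
    simp [ZMod.card]
    ring
  · intro r s hrs
    rw [Function.onFun, Set.disjoint_left]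
    intro y hr hs
    apply hrs
    apply idx_inj p
    have := (KS p).mul_mem hr ((KS p).inv_mem hs)
    convert this using 1
    group

lemma conv_eq (μ : Measure (GL (Fin 3) ℚ_[p])) (x : GL (Fin 3) ℚ_[p])
    (S : Set (GL (Fin 3) ℚ_[p])) (hSm : MeasurableSet S)
    (hS : ∀ y, y ∈ S ↔ y ∈ AA p ∧ ((padicDiag p 1 1 1)⁻¹ * x)⁻¹ * y ∈ AA p) :
    padicConv p μ (padicPhi p 1 0 0) (padicPhi p 1 1 0) x = (μ S).toReal := by
  have : (fun y => padicPhi p 1 0 0 y * padicPhi p 1 1 0 (y⁻¹ * x)) = S.indicator 1 := by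
    funext y
    have h2 : y⁻¹ * x ∈ padicDoubleCoset p 1 1 0 ↔
        ((padicDiag p 1 1 1)⁻¹ * x)⁻¹ * y ∈ AA p := by
      rw [mem_DC110]
      have : padicDiag p 1 1 1 * (y⁻¹ * x)⁻¹ = ((padicDiag p 1 1 1)⁻¹ * x)⁻¹ * y := by
        rw [mul_inv_rev, mul_inv_rev, inv_inv, inv_inv, ← mul_assoc, pi_comm]
      rw [this]
    classical
    simp only [padicPhi, Set.indicator_apply, DC_eq_AA, h2, hS, Pi.one_apply]
    split_ifs <;> simp_all
  rw [padicConv, this, integral_indicator_one hSm]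
  rfl

/-- `Φ_p(1,0,0) * Φ_p(1,1,0) = Φ_p(2,1,0) + (p² + p + 1) Φ_p(1,1,1)`. -/
theorem statement0 (μ : Measure (GL (Fin 3) ℚ_[p])) [μ.IsHaarMeasure]
    (hμ : μ (padicK p) = 1) :
    ∀ x, padicConv p μ (padicPhi p 1 0 0) (padicPhi p 1 1 0) x =
      padicPhi p 2 1 0 x + ((p : ℝ) ^ 2 + p + 1) * padicPhi p 1 1 1 x := by
  intro x
  by_cases hK : (padicDiag p 1 1 1)⁻¹ * x ∈ KS p
  · have h1 : x ∈ padicDoubleCoset p 1 1 1 := (mem_DC111 p x).mpr hK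
    have h2 : x ∉ padicDoubleCoset p 2 1 0 := fun h => (of_DC210 p h).1 hK
    rw [conv_eq p μ x (AA p) (meas_AA p) (fun y => ⟨fun h =>
      ⟨h, AA_mul_left p ((KS p).inv_mem hK) h⟩, fun h => h.1⟩), measure_AA p μ hμ]
    rw [padicPhi, padicPhi, Set.indicator_of_notMem h2, Set.indicator_of_mem h1]
    rw [ENNReal.toReal_natCast]
    push_cast
    ring
  · have h1 : x ∉ padicDoubleCoset p 1 1 1 := fun h => hK ((mem_DC111 p x).mp h)
    by_cases hD : x ∈ padicDoubleCoset p 2 1 0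
    · obtain ⟨-, y, hy, hy'⟩ := of_DC210 p hD
      have hkey := (main_key p hy hy' hK).2
      rw [conv_eq p μ x (cos p y) (meas_cos p y), measure_cos p μ hμ]
      · rw [padicPhi, padicPhi, Set.indicator_of_notMem h1, Set.indicator_of_mem hD]
        simp
      · intro z
        refine ⟨fun h => ?_, fun h => hkey z h.1 h.2⟩
        have a1 := AA_mul_right p h hy
        have a2 := AA_mul_right p h hy'
        rw [mul_assoc] at a2
        simp only [mul_inv_cancel_left] at a1 a2
        exact ⟨a1, a2⟩
    · rw [conv_eq p μ x ∅ MeasurableSet.empty]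
      · rw [padicPhi, padicPhi, Set.indicator_of_notMem h1, Set.indicator_of_notMem hD]
        simp
      · intro y
        refine ⟨fun h => h.elim, fun h => hD ?_⟩
        have := (main_key p h.1 h.2 hK).1
        rwa [mul_inv_cancel_left] at this

end
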